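/- Let M be a left 𝕆-module with dim_ℝ M < ∞, and let n₁ = dim_ℝ 𝒜(M), n₂ = dim_ℝ 𝒜⁻(M). Then M is isomorphic as a left 𝕆-module to 𝕆^{n₁} ⊕ 𝕆̄^{n₂}; in particular dim_ℝ M = 8(n₁ + n₂). -/

import Mathlib

noncomputable section

open scoped Quaternion

/-- The octonions, realized as pairs of quaternions via the Cayley–Dickson construction. -/
def Octo : Type := ℍ[ℝ] × ℍ[ℝ]

namespace Octo

instance : AddCommGroup Octo := inferInstanceAs (AddCommGroup (ℍ[ℝ] × ℍ[ℝ]))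
instance : Module ℝ Octo := inferInstanceAs (Module ℝ (ℍ[ℝ] × ℍ[ℝ]))

/-- Build an octonion from a pair of quaternions. -/
def mk (a b : ℍ[ℝ]) : Octo := (a, b)

/-- First quaternion component. -/
def p1 (x : Octo) : ℍ[ℝ] := (show ℍ[ℝ] × ℍ[ℝ] from x).1

/-- Second quaternion component. -/
def p2 (x : Octo) : ℍ[ℝ] := (show ℍ[ℝ] × ℍ[ℝ] from x).2

/-- Cayley–Dickson multiplication: `(a,b)(c,d) = (ac − d̄b, da + bc̄)`. -/
instance : Mul Octo :=
  ⟨fun x y => mk (p1 x * p1 y - star (p2 y) * p2 x) (p2 y * p1 x + p2 x * star (p1 y))⟩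

instance : One Octo := ⟨mk 1 0⟩

/-- Octonion conjugation: for `x = (a,b)`, `x̄ = (ā, −b)`. -/
def conj (x : Octo) : Octo := mk (star (p1 x)) (-(p2 x))

/-- The octonion associator `[x,y,z] = (xy)z − x(yz)`. -/
def assoc (x y z : Octo) : Octo := x * y * z - x * (y * z)

/-- The octonion commutator `[x,y] = xy − yx`. -/
def comm (x y : Octo) : Octo := x * y - y * x

/-- The canonical embedding of the reals into the octonions. -/
def ofReal (r : ℝ) : Octo := r • (1 : Octo)

end Octo

section OMod

variable {M : Type*} [AddCommGroup M] [Module ℝ M]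
variable {N : Type*} [AddCommGroup N] [Module ℝ N]

/-- `IsOMod sm` says that the scalar multiplication `sm : 𝕆 × M → M` makes the real vector
space `M` a left 𝕆-module: `sm` is ℝ-bilinear, unital, and the left associator is
alternating in its two octonion arguments. -/
structure IsOMod (sm : Octo → M → M) : Prop where
  smul_add : ∀ (p : Octo) (m n : M), sm p (m + n) = sm p m + sm p n
  add_smul : ∀ (p q : Octo) (m : M), sm (p + q) m = sm p m + sm q m
  real_smul : ∀ (r : ℝ) (p : Octo) (m : M), sm (r • p) m = r • sm p m
  smul_real : ∀ (r : ℝ) (p : Octo) (m : M), sm p (r • m) = r • sm p m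
  one_smul : ∀ m : M, sm 1 m = m
  alt : ∀ (p q : Octo) (m : M),
    sm (p * q) m - sm p (sm q m) = -(sm (q * p) m - sm q (sm p m))

/-- The left associator `[p,q,m] = (pq)m − p(qm)`. -/
def oLassoc (sm : Octo → M → M) (p q : Octo) (m : M) : M :=
  sm (p * q) m - sm p (sm q m)

/-- The set `𝒜(M)` of associative elements: `[p,q,m] = 0` for all `p,q ∈ 𝕆`. -/
def assocSet (sm : Octo → M → M) : Set M :=
  {m | ∀ p q : Octo, oLassoc sm p q m = 0}

/-- The set `𝒜⁻(M)` of conjugate associative elements: `(pq)m = q(pm)` for all `p,q ∈ 𝕆`. -/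
def conjAssocSet (sm : Octo → M → M) : Set M :=
  {m | ∀ p q : Octo, sm (p * q) m = sm q (sm p m)}

/-- A homomorphism of left 𝕆-modules: an ℝ-linear map commuting with 𝕆-scalar
multiplication. -/
def IsOHom (sm : Octo → M → M) (sm' : Octo → N → N) (f : M → N) : Prop :=
  IsLinearMap ℝ f ∧ ∀ (p : Octo) (m : M), f (sm p m) = sm' p (f m)

/-- Two left 𝕆-modules are isomorphic if there is a bijective homomorphism between them. -/
def OIso (sm : Octo → M → M) (sm' : Octo → N → N) : Prop :=
  ∃ f : M → N, IsOHom sm sm' f ∧ Function.Bijective f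

/-- A submodule: a real subspace closed under 𝕆-scalar multiplication. -/
structure IsOSubmodule (sm : Octo → M → M) (S : Set M) : Prop where
  zero_mem : (0 : M) ∈ S
  add_mem : ∀ {x y : M}, x ∈ S → y ∈ S → x + y ∈ S
  smul_mem : ∀ (r : ℝ) {x : M}, x ∈ S → r • x ∈ S
  osmul_mem : ∀ (p : Octo) {x : M}, x ∈ S → sm p x ∈ S

/-- `⟨m⟩_𝕆`, the smallest submodule containing `m`, as a set. -/
def genSet (sm : Octo → M → M) (m : M) : Set M :=
  ⋂₀ {S : Set M | IsOSubmodule sm S ∧ m ∈ S}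

/-- An element `m` is cyclic if `⟨m⟩_𝕆 = 𝕆m`. -/
def IsOCyclic (sm : Octo → M → M) (m : M) : Prop :=
  genSet sm m = {x | ∃ p : Octo, x = sm p m}

/-- 𝕆-linear independence of a subset `S ⊆ M`: any finite 𝕆-linear combination of
distinct elements of `S` that vanishes has all coefficients zero. -/
def OLinIndep (sm : Octo → M → M) (S : Set M) : Prop :=
  ∀ (n : ℕ) (s : Fin n → M) (r : Fin n → Octo), Function.Injective s → (∀ i, s i ∈ S) →
    (∑ i, sm (r i) (s i)) = 0 → ∀ i, r i = 0

end OMod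

/-- The canonical left 𝕆-module structure on 𝕆 itself. -/
def oSmul : Octo → Octo → Octo := fun p x => p * x

/-- The left 𝕆-module structure `𝕆̄` on 𝕆: `p ·̂ x = p̄x`. -/
def oBarSmul : Octo → Octo → Octo := fun p x => Octo.conj p * x

/-- The left 𝕆-module structure on `𝕆^{n₁} ⊕ 𝕆̄^{n₂}`. -/
def pairSmul (n₁ n₂ : ℕ) :
    Octo → (Fin n₁ → Octo) × (Fin n₂ → Octo) → (Fin n₁ → Octo) × (Fin n₂ → Octo) :=
  fun p x => (fun i => p * x.1 i, fun i => Octo.conj p * x.2 i)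

/-! Left multiplication by the seven imaginary units of `𝕆` makes a left 𝕆-module `M` carry seven
anticommuting square roots of `-1`, that is, a representation of a Clifford algebra. The product
`Ω` of the seven is, up to sign, a central involution; it is `1` on `𝕆` and `-1` on `𝕆̄`, and
passing from `M` to the module with action `p̄m` changes its sign.

For anticommuting units `p`, `q` the product of `p`, `q`, `qp` is an involution whose fixed vectors
satisfy `[q,p,m] = 0`. Four such involutions commute, and an element fixed by all of them is
associative. Each involution anticommutes with a unit commuting with the preceding ones, so that
this unit exchanges its two eigenspaces. Consequently a submodule is determined by its associative
and conjugate associative elements. Applied to the kernel and to the range of the map sending two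
families of octonions to the corresponding octonionic combination of bases of `𝒜(M)` and `𝒜⁻(M)`,
this shows that the map is bijective. -/

section Eigenspace

open Module.End

variable {R M : Type*} [CommRing R] [AddCommGroup M] [Module R M] {T e : Module.End R M}
  {K N : Submodule R M}

theorem list_prod_mem_invtSubmodule {w : List (Module.End R M)}
    (h : ∀ f ∈ w, K ∈ f.invtSubmodule) : K ∈ w.prod.invtSubmodule :=
  List.prod_induction (fun f : Module.End R M => K ∈ f.invtSubmodule)
    (fun f _ => invtSubmodule.comp f) (by simp) h

theorem le_of_inf_eigenspace_le [Invertible (2 : R)] (hT : T * T = 1) (hK : K ∈ T.invtSubmodule)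
    (h₁ : K ⊓ T.eigenspace 1 ≤ N) (h₂ : K ⊓ T.eigenspace (-1) ≤ N) : K ≤ N := by
  intro x hx
  have hTT : T (T x) = x := LinearMap.congr_fun hT x
  have hTx : T x ∈ K := hK hx
  have hadd : x + T x ∈ N :=
    h₁ ⟨add_mem hx hTx, mem_eigenspace_iff.mpr (by rw [map_add, hTT, one_smul, add_comm])⟩
  have hsub : x - T x ∈ N :=
    h₂ ⟨sub_mem hx hTx, mem_eigenspace_iff.mpr (by rw [map_sub, hTT, neg_one_smul, neg_sub])⟩
  have hx2 : x = ⅟(2 : R) • ((x + T x) + (x - T x)) := by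
    rw [add_add_sub_cancel, ← two_smul R x, invOf_smul_smul]
  rw [hx2]
  exact N.smul_mem _ (add_mem hadd hsub)

-- `e` exchanges the two eigenspaces of `T`.
theorem le_of_inf_eigenspace_one_le [Invertible (2 : R)] (hT : T * T = 1) (he : e * e = -1)
    (hTe : T * e = -(e * T)) (hKT : K ∈ T.invtSubmodule) (hKe : K ∈ e.invtSubmodule)
    (hNe : N ∈ e.invtSubmodule) (h : K ⊓ T.eigenspace 1 ≤ N) : K ≤ N := by
  refine le_of_inf_eigenspace_le hT hKT h fun x hx => ?_
  have hTx : T x = -x := by rw [mem_eigenspace_iff.mp hx.2, neg_one_smul]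
  have hTex : T (e x) = e x := by
    have := LinearMap.congr_fun hTe x
    rwa [Module.End.mul_apply, LinearMap.neg_apply, Module.End.mul_apply, hTx, map_neg, neg_neg]
      at this
  have hex : e x ∈ N := h ⟨hKe hx.1, mem_eigenspace_iff.mpr (by rw [hTex, one_smul])⟩
  have heex : e (e x) = -x := LinearMap.congr_fun he x
  simpa only [heex, neg_mem_iff] using (mem_invtSubmodule_iff_forall_mem_of_mem e).mp hNe _ hex

end Eigenspace

/-- A family of pairwise anticommuting square roots of `-1`, the standard generators of a
negative definite Clifford algebra. -/
structure IsCliffordFamily {ι R : Type*} [Ring R] (e : ι → R) : Prop where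
  mul_self (a : ι) : e a * e a = -1
  anticomm {a b : ι} : a ≠ b → e a * e b = -(e b * e a)

/-- The product `e a₁ ⋯ e aₙ` along the word `[a₁, …, aₙ]`. -/
def cliffordWord {ι R : Type*} [Ring R] (e : ι → R) (w : List ι) : R := (w.map e).prod

/-- The number of pairs of distinct letters, one from each word: the number of sign changes in
moving a Clifford word past another. -/
def swapCount {ι : Type*} [DecidableEq ι] (v w : List ι) : ℕ :=
  (v.map fun a => w.countP (· ≠ a)).sum

section Clifford

variable {ι R : Type*} [Ring R] {e : ι → R}

@[simp] theorem cliffordWord_nil : cliffordWord e [] = 1 := rfl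

@[simp] theorem cliffordWord_cons (a : ι) (w : List ι) :
    cliffordWord e (a :: w) = e a * cliffordWord e w := List.prod_cons

theorem cliffordWord_append (v w : List ι) :
    cliffordWord e (v ++ w) = cliffordWord e v * cliffordWord e w := by
  simp [cliffordWord]

theorem cliffordWord_neg (w : List ι) :
    cliffordWord (-e) w = (-1) ^ w.length * cliffordWord e w := by
  simpa [cliffordWord, Function.comp_def, Pi.neg_def] using List.prod_map_neg (w.map e)

namespace IsCliffordFamily

theorem triple_mul_self (he : IsCliffordFamily e) {a b c : ι} (hab : a ≠ b) (hac : a ≠ c)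
    (hbc : b ≠ c) : cliffordWord e [a, b, c] * cliffordWord e [a, b, c] = 1 := by
  have hcomm : e b * e c * e a = e a * (e b * e c) := by
    rw [mul_assoc, he.anticomm hac.symm, mul_neg, ← mul_assoc, he.anticomm hab.symm, neg_mul,
      neg_neg, mul_assoc]
  have hsq : e b * e c * (e b * e c) = -1 := by
    rw [mul_assoc, ← mul_assoc (e c), he.anticomm hbc.symm, neg_mul, mul_assoc, he.mul_self,
      mul_neg_one, neg_neg, he.mul_self]
  simp only [cliffordWord_cons, cliffordWord_nil, mul_one]
  rw [mul_assoc, ← mul_assoc (e b * e c), hcomm, mul_assoc, hsq, ← mul_assoc, he.mul_self,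
    neg_mul_neg, one_mul]

variable [DecidableEq ι]

theorem mul_cliffordWord (he : IsCliffordFamily e) (a : ι) (w : List ι) :
    e a * cliffordWord e w = (-1 : ℤ) ^ w.countP (· ≠ a) • (cliffordWord e w * e a) := by
  induction w with
  | nil => simp
  | cons b w ih =>
    rcases eq_or_ne b a with rfl | hba
    · rw [cliffordWord_cons, List.countP_cons_of_neg (by simp), mul_assoc, ← mul_smul_comm, ← ih]
    · have hcount : (b :: w).countP (· ≠ a) = w.countP (· ≠ a) + 1 :=
        List.countP_cons_of_pos (by simpa using hba)
      rw [cliffordWord_cons, ← mul_assoc, he.anticomm hba.symm, neg_mul, mul_assoc, ih, hcount,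
        pow_succ, mul_neg_one, neg_smul, mul_smul_comm, mul_assoc]

theorem cliffordWord_mul_cliffordWord (he : IsCliffordFamily e) (v w : List ι) :
    cliffordWord e v * cliffordWord e w =
      (-1 : ℤ) ^ swapCount v w • (cliffordWord e w * cliffordWord e v) := by
  induction v with
  | nil => simp [swapCount]
  | cons a v ih =>
    have hcount : swapCount (a :: v) w = swapCount v w + w.countP (· ≠ a) := by
      simp [swapCount, add_comm]
    rw [cliffordWord_cons, mul_assoc, ih, mul_smul_comm, ← mul_assoc, he.mul_cliffordWord,
      smul_mul_assoc, smul_smul, ← pow_add, hcount, mul_assoc]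

theorem commute_cliffordWord (he : IsCliffordFamily e) {v w : List ι} (h : Even (swapCount v w)) :
    Commute (cliffordWord e v) (cliffordWord e w) :=
  (he.cliffordWord_mul_cliffordWord v w).trans (by rw [h.neg_one_pow, one_smul])

theorem cliffordWord_mul_eq_neg (he : IsCliffordFamily e) {v w : List ι}
    (h : Odd (swapCount v w)) :
    cliffordWord e v * cliffordWord e w = -(cliffordWord e w * cliffordWord e v) := by
  rw [he.cliffordWord_mul_cliffordWord, h.neg_one_pow, neg_one_smul]

end IsCliffordFamily

end Clifford

namespace Octo

@[ext] theorem ext {x y : Octo} (h₁ : p1 x = p1 y) (h₂ : p2 x = p2 y) : x = y := Prod.ext h₁ h₂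

@[simp] theorem p1_mk (a b : ℍ[ℝ]) : p1 (mk a b) = a := rfl
@[simp] theorem p2_mk (a b : ℍ[ℝ]) : p2 (mk a b) = b := rfl
@[simp] theorem p1_zero : p1 0 = 0 := rfl
@[simp] theorem p2_zero : p2 0 = 0 := rfl
@[simp] theorem p1_one : p1 1 = 1 := rfl
@[simp] theorem p2_one : p2 1 = 0 := rfl
@[simp] theorem p1_add (x y : Octo) : p1 (x + y) = p1 x + p1 y := rfl
@[simp] theorem p2_add (x y : Octo) : p2 (x + y) = p2 x + p2 y := rfl
@[simp] theorem p1_neg (x : Octo) : p1 (-x) = -p1 x := rfl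
@[simp] theorem p2_neg (x : Octo) : p2 (-x) = -p2 x := rfl
@[simp] theorem p1_smul (r : ℝ) (x : Octo) : p1 (r • x) = r • p1 x := rfl
@[simp] theorem p2_smul (r : ℝ) (x : Octo) : p2 (r • x) = r • p2 x := rfl
@[simp] theorem p1_conj (x : Octo) : p1 (conj x) = star (p1 x) := rfl
@[simp] theorem p2_conj (x : Octo) : p2 (conj x) = -p2 x := rfl
@[simp] theorem p1_mul (x y : Octo) : p1 (x * y) = p1 x * p1 y - star (p2 y) * p2 x := rfl
@[simp] theorem p2_mul (x y : Octo) : p2 (x * y) = p2 y * p1 x + p2 x * star (p1 y) := rfl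

-- Scoped, because the ring structure would supply other additive group instances on products of
-- copies of `Octo` than the componentwise ones.
scoped instance : NonAssocRing Octo where
  __ := (inferInstance : AddCommGroup Octo)
  left_distrib x y z := by
    ext1 <;> simp only [p1_mul, p2_mul, p1_add, p2_add, star_add, mul_add, add_mul] <;> abel
  right_distrib x y z := by
    ext1 <;> simp only [p1_mul, p2_mul, p1_add, p2_add, mul_add, add_mul] <;> abel
  zero_mul x := by ext1 <;> simp
  mul_zero x := by ext1 <;> simp
  one_mul x := by ext1 <;> simp
  mul_one x := by ext1 <;> simp

instance : IsScalarTower ℝ Octo Octo where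
  smul_assoc r x y := by ext1 <;> simp [smul_sub]

instance : SMulCommClass ℝ Octo Octo where
  smul_comm r x y := by ext1 <;> simp [smul_sub]

theorem rank_eq_eight : Module.rank ℝ Octo = 8 := by
  change Module.rank ℝ (ℍ[ℝ] × ℍ[ℝ]) = 8
  rw [rank_prod', Quaternion.rank_eq_four]
  norm_num

@[simp] theorem conj_conj (x : Octo) : conj (conj x) = x := by ext1 <;> simp

@[simp] theorem conj_mul (x y : Octo) : conj (x * y) = conj y * conj x := by
  ext1 <;> simp [add_comm]

@[simp] theorem conj_one : conj 1 = 1 := by ext1 <;> simp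

@[simp] theorem conj_add (x y : Octo) : conj (x + y) = conj x + conj y := by
  ext1 <;> simp [add_comm]

@[simp] theorem conj_smul (r : ℝ) (x : Octo) : conj (r • x) = r • conj x := by ext1 <;> simp

/-- The real part of an octonion. -/
def re (x : Octo) : ℝ := (p1 x).re

theorem re_zero : re 0 = 0 := rfl

/-- The squared norm `x̄x` of an octonion. -/
def normSq (x : Octo) : ℝ := Quaternion.normSq (p1 x) + Quaternion.normSq (p2 x)

theorem add_conj (x : Octo) : x + conj x = (2 * re x) • (1 : Octo) := by
  ext1
  · ext <;> simp [re, two_mul]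
  · simp

theorem conj_mul_mul (x y : Octo) : conj x * (x * y) = normSq x • y := by
  ext1 <;> ext <;> simp [normSq, Quaternion.normSq_def'] <;> ring

theorem mul_mul_self (x y : Octo) : x * (x * y) = (2 * re x) • (x * y) - normSq x • y := by
  rw [← conj_mul_mul, eq_sub_iff_add_eq, ← add_mul, add_conj, smul_mul_assoc, one_mul]

theorem mul_self (x : Octo) : x * x = (2 * re x) • x - normSq x • (1 : Octo) := by
  simpa using mul_mul_self x 1

theorem mul_self_mul (x y : Octo) : x * x * y = x * (x * y) := by
  rw [mul_self, mul_mul_self, sub_mul, smul_mul_assoc, smul_mul_assoc, one_mul]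

theorem mul_add_mul_of_conj_eq_neg {x y : Octo} (hx : conj x = -x) (hy : conj y = -y) :
    x * y + y * x = (2 * re (x * y)) • (1 : Octo) := by
  rw [← add_conj, conj_mul, hx, hy, neg_mul_neg]

/-- The quaternion `a + bi + cj + dk`. -/
def quat (a b c d : ℝ) : ℍ[ℝ] := ⟨a, b, c, d⟩

@[simp] theorem re_quat (a b c d : ℝ) : (quat a b c d).re = a := rfl
@[simp] theorem imI_quat (a b c d : ℝ) : (quat a b c d).imI = b := rfl
@[simp] theorem imJ_quat (a b c d : ℝ) : (quat a b c d).imJ = c := rfl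
@[simp] theorem imK_quat (a b c d : ℝ) : (quat a b c d).imK = d := rfl

/-- The imaginary units `i, j, k, l, il, jl, kl`, where `l = (0, 1)`. -/
def imUnit : Fin 7 → Octo :=
  ![mk (quat 0 1 0 0) 0, mk (quat 0 0 1 0) 0, mk (quat 0 0 0 1) 0,
    mk 0 1, mk 0 (quat 0 1 0 0), mk 0 (quat 0 0 1 0), mk 0 (quat 0 0 0 1)]

theorem conj_imUnit (a : Fin 7) : conj (imUnit a) = -imUnit a := by
  fin_cases a <;> ext <;> simp [imUnit]

theorem imUnit_mul_self (a : Fin 7) : imUnit a * imUnit a = -1 := by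
  fin_cases a <;> ext <;> simp [imUnit]

theorem re_imUnit_mul {a b : Fin 7} (h : a ≠ b) : re (imUnit a * imUnit b) = 0 := by
  fin_cases a <;> fin_cases b <;> first | exact absurd rfl h | simp [imUnit, re]

theorem imUnit_mul_add_mul {a b : Fin 7} (h : a ≠ b) :
    imUnit a * imUnit b + imUnit b * imUnit a = 0 := by
  rw [mul_add_mul_of_conj_eq_neg (conj_imUnit a) (conj_imUnit b), re_imUnit_mul h, mul_zero,
    zero_smul]

theorem eq_add_l_mul (x : Octo) : x = mk (p1 x) 0 + imUnit 3 * mk (star (p2 x)) 0 := by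
  ext1 <;> simp [imUnit]

theorem mk_zero_right_eq (a : ℍ[ℝ]) : mk a 0 =
    a.re • (1 : Octo) + a.imI • imUnit 0 + a.imJ • imUnit 1 + a.imK • imUnit 2 := by
  ext <;> simp [imUnit]

theorem mk_mul_mk (a b : ℍ[ℝ]) : mk a 0 * mk b 0 = mk (a * b) 0 := by
  ext1 <;> simp

theorem l_mul_mk_mul_mk (b d : ℍ[ℝ]) :
    imUnit 3 * mk b 0 * mk d 0 = imUnit 3 * mk (d * b) 0 := by
  ext1 <;> simp [imUnit]

theorem i_mul_j : imUnit 0 * imUnit 1 = imUnit 2 := by ext <;> simp [imUnit]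
theorem i_mul_l : imUnit 0 * imUnit 3 = imUnit 4 := by ext <;> simp [imUnit]
theorem j_mul_l : imUnit 1 * imUnit 3 = imUnit 5 := by ext <;> simp [imUnit]
theorem k_mul_l : imUnit 2 * imUnit 3 = imUnit 6 := by ext <;> simp [imUnit]
theorem j_mul_i : imUnit 1 * imUnit 0 = -imUnit 2 := by ext <;> simp [imUnit]

theorem re_smul_one_of_mem_assocSet {x : Octo} (hx : x ∈ assocSet oSmul) :
    re x • (1 : Octo) = x := by
  have hcomponents p q : _ ∧ _ := Octo.ext_iff.mp (sub_eq_zero.mp (hx p q))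
  obtain ⟨hk, hj, hi, hre⟩ :
      (p2 x).imK = 0 ∧ (p2 x).imJ = 0 ∧ (p2 x).imI = 0 ∧ (p2 x).re = 0 := by
    simpa [oSmul, Quaternion.ext_iff, imUnit, self_eq_neg, neg_eq_self] using
      hcomponents (imUnit 0) (imUnit 1)
  obtain ⟨hk', hj'⟩ : (p1 x).imK = 0 ∧ (p1 x).imJ = 0 := by
    simpa [oSmul, Quaternion.ext_iff, imUnit, self_eq_neg, neg_eq_self, hk, hj] using
      hcomponents (imUnit 0) (imUnit 3)
  have hi' : (p1 x).imI = 0 := by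
    simpa [oSmul, Quaternion.ext_iff, imUnit, self_eq_neg, neg_eq_self, hk, hi, hk'] using
      hcomponents (imUnit 1) (imUnit 3)
  ext <;> simp [re, *]

theorem eq_zero_of_mem_conjAssocSet {x : Octo} (hx : x ∈ conjAssocSet oSmul) : x = 0 := by
  have hcomponents p q : _ ∧ _ := Octo.ext_iff.mp (hx p q)
  obtain ⟨hk, hj, hi, hre⟩ :
      (p1 x).imK = 0 ∧ (p1 x).imJ = 0 ∧ (p1 x).imI = 0 ∧ (p1 x).re = 0 := by
    simpa [oSmul, Quaternion.ext_iff, imUnit, self_eq_neg, neg_eq_self] using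
      hcomponents (imUnit 0) (imUnit 1)
  obtain ⟨hi', hre'⟩ : (p2 x).imI = 0 ∧ (p2 x).re = 0 := by
    simpa [oSmul, Quaternion.ext_iff, imUnit, self_eq_neg, neg_eq_self, hi, hre] using
      hcomponents (imUnit 0) (imUnit 3)
  have hj' : (p2 x).imJ = 0 := by
    simpa [oSmul, Quaternion.ext_iff, imUnit, self_eq_neg, neg_eq_self, hj, hre, hre'] using
      hcomponents (imUnit 1) (imUnit 3)
  have hk' : (p2 x).imK = 0 := by
    simpa [oSmul, Quaternion.ext_iff, imUnit, self_eq_neg, neg_eq_self, hk, hre, hre'] using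
      hcomponents (imUnit 2) (imUnit 3)
  ext <;> simp [*]

theorem isOMod_oSmul : IsOMod oSmul where
  smul_add := mul_add
  add_smul := add_mul
  real_smul := smul_mul_assoc
  smul_real r p m := mul_smul_comm r p m
  one_smul := one_mul
  alt p q m := by
    have hsq := mul_self_mul (p + q) m
    simp only [mul_add, add_mul, mul_self_mul] at hsq
    simp only [oSmul]
    rw [← sub_eq_zero] at hsq ⊢
    rw [← hsq]
    abel

end Octo

/-- The scalar multiplication `p ·̂ m = p̄m` of the conjugate of an 𝕆-module. -/
def barSmul {M : Type*} (sm : Octo → M → M) : Octo → M → M := fun p => sm p.conj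

theorem barSmul_barSmul {M : Type*} (sm : Octo → M → M) : barSmul (barSmul sm) = sm :=
  funext fun p => congrArg sm p.conj_conj

namespace IsOMod

open Octo Module.End

variable {M : Type*} [AddCommGroup M] [Module ℝ M] {sm : Octo → M → M}

/-- The action of `𝕆` on a left 𝕆-module as a linear map into the real endomorphisms. -/
def lsmul (h : IsOMod sm) : Octo →ₗ[ℝ] Module.End ℝ M :=
  LinearMap.mk₂ ℝ sm (fun p q m => h.add_smul p q m) (fun r p m => h.real_smul r p m)
    (fun p m n => h.smul_add p m n) (fun r p m => h.smul_real r p m)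

@[simp] theorem lsmul_apply (h : IsOMod sm) (p : Octo) (m : M) : h.lsmul p m = sm p m := rfl

@[simp] theorem lsmul_one (h : IsOMod sm) : h.lsmul 1 = 1 := LinearMap.ext h.one_smul

theorem lsmul_mul_self (h : IsOMod sm) (p : Octo) : h.lsmul (p * p) = h.lsmul p * h.lsmul p :=
  have : IsAddTorsionFree M := .of_isTorsionFree ℝ M
  LinearMap.ext fun m => sub_eq_zero.mp (self_eq_neg.mp (h.alt p p m))

theorem lsmul_mul_add_lsmul_mul (h : IsOMod sm) (p q : Octo) :
    h.lsmul p * h.lsmul q + h.lsmul q * h.lsmul p = h.lsmul (p * q + q * p) := by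
  ext m
  have halt := h.alt p q m
  simp only [LinearMap.add_apply, Module.End.mul_apply, lsmul_apply, h.add_smul]
  rw [← sub_eq_zero] at halt ⊢
  rw [← neg_eq_zero, ← halt]
  abel

protected theorem bar (h : IsOMod sm) : IsOMod (barSmul sm) where
  smul_add p := h.smul_add p.conj
  add_smul p q m := by simp only [barSmul, conj_add, h.add_smul]
  real_smul r p m := by simp only [barSmul, conj_smul, h.real_smul]
  smul_real r p := h.smul_real r p.conj
  one_smul m := by simp only [barSmul, conj_one, h.one_smul]
  alt p q m := by
    have halt := h.alt q.conj p.conj m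
    simp only [barSmul, Octo.conj_mul]
    rw [← sub_eq_zero] at halt ⊢
    rw [← halt]
    abel

end IsOMod

theorem conjAssocSet_eq_assocSet_barSmul {M : Type*} [AddCommGroup M]
    (sm : Octo → M → M) : conjAssocSet sm = assocSet (barSmul sm) := by
  ext m
  refine ⟨fun hm p q => ?_, fun hm p q => ?_⟩
  · simpa [oLassoc, barSmul, sub_eq_zero] using hm q.conj p.conj
  · simpa [oLassoc, barSmul, sub_eq_zero] using hm q.conj p.conj

theorem assocSet_eq_conjAssocSet_barSmul {M : Type*} [AddCommGroup M]
    (sm : Octo → M → M) : assocSet sm = conjAssocSet (barSmul sm) := by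
  rw [conjAssocSet_eq_assocSet_barSmul, barSmul_barSmul]

namespace IsOMod

open Octo Module.End

variable {M : Type*} [AddCommGroup M] [Module ℝ M] {sm : Octo → M → M}

theorem coe_span_assocSet (h : IsOMod sm) :
    (Submodule.span ℝ (assocSet sm) : Set M) = assocSet sm := by
  have hker : assocSet sm =
      (⨅ p, ⨅ q, LinearMap.ker (h.lsmul (p * q) - h.lsmul p * h.lsmul q) : Submodule ℝ M) := by
    ext m
    simp [assocSet, oLassoc]
  rw [hker, Submodule.span_eq]

theorem coe_span_conjAssocSet (h : IsOMod sm) :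
    (Submodule.span ℝ (conjAssocSet sm) : Set M) = conjAssocSet sm := by
  rw [conjAssocSet_eq_assocSet_barSmul, h.bar.coe_span_assocSet]

/-- The left multiplications by the imaginary units. -/
def lsmulUnit (h : IsOMod sm) (a : Fin 7) : Module.End ℝ M := h.lsmul (imUnit a)

theorem isCliffordFamily_lsmulUnit (h : IsOMod sm) : IsCliffordFamily h.lsmulUnit where
  mul_self a := by
    rw [lsmulUnit, ← h.lsmul_mul_self, imUnit_mul_self, map_neg, lsmul_one]
  anticomm hab := by
    apply eq_neg_of_add_eq_zero_left
    rw [lsmulUnit, lsmulUnit, lsmul_mul_add_lsmul_mul, imUnit_mul_add_mul hab, map_zero]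

theorem lsmulUnit_bar (h : IsOMod sm) : h.bar.lsmulUnit = -h.lsmulUnit := by
  ext1 a
  change h.lsmul (conj (imUnit a)) = -h.lsmul (imUnit a)
  rw [conj_imUnit, map_neg]

theorem mem_invtSubmodule_cliffordWord (h : IsOMod sm) {K : Submodule ℝ M}
    (hK : ∀ p, K ∈ (h.lsmul p).invtSubmodule) (w : List (Fin 7)) :
    K ∈ (cliffordWord h.lsmulUnit w).invtSubmodule :=
  list_prod_mem_invtSubmodule <| List.forall_mem_map.mpr fun a _ => hK (imUnit a)

end IsOMod

namespace IsOMod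

open Octo Module.End

variable {M : Type*} [AddCommGroup M] [Module ℝ M] {sm : Octo → M → M}

theorem smul_conj_smul (h : IsOMod sm) (p : Octo) (m : M) :
    sm p.conj (sm p m) = normSq p • m := by
  have hconj : p.conj = (2 * re p) • (1 : Octo) - p := eq_sub_of_add_eq' (add_conj p)
  have hpp := LinearMap.congr_fun (h.lsmul_mul_self p) m
  rw [mul_self, map_sub, map_smul, map_smul, lsmul_one] at hpp
  rw [← h.lsmul_apply p.conj, hconj, map_sub, map_smul, lsmul_one]
  change _ = sm p (sm p m) at hpp
  simp only [LinearMap.sub_apply, LinearMap.smul_apply, one_apply, lsmul_apply] at hpp ⊢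
  rw [← hpp, sub_sub_cancel]

/-- The left associator `[p,q,m]` as a bilinear map in `(p,q)`. -/
def associator (h : IsOMod sm) (m : M) : Octo →ₗ[ℝ] Octo →ₗ[ℝ] M :=
  LinearMap.mk₂ ℝ (fun p q => oLassoc sm p q m)
    (fun p q r => by simp only [oLassoc, add_mul, h.add_smul, add_sub_add_comm])
    (fun c p q => by simp only [oLassoc, smul_mul_assoc, h.real_smul, smul_sub])
    (fun p q r => by simp only [oLassoc, mul_add, h.add_smul, h.smul_add, add_sub_add_comm])
    (fun c p q => by simp only [oLassoc, mul_smul_comm, h.real_smul, h.smul_real, smul_sub])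

section Associator

variable (h : IsOMod sm) (m : M)

theorem associator_apply (p q : Octo) :
    h.associator m p q = sm (p * q) m - sm p (sm q m) := rfl

theorem associator_one_left (q : Octo) : h.associator m 1 q = 0 := by
  rw [associator_apply, one_mul, h.one_smul, sub_self]

theorem associator_one_right (p : Octo) : h.associator m p 1 = 0 := by
  rw [associator_apply, mul_one, h.one_smul, sub_self]

theorem associator_swap (p q : Octo) : h.associator m p q = -h.associator m q p := h.alt p q m

theorem associator_self (p : Octo) : h.associator m p p = 0 :=
  sub_eq_zero.mpr (LinearMap.congr_fun (h.lsmul_mul_self p) m)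

theorem associator_conj_left (p q : Octo) :
    h.associator m p.conj q = -h.associator m p q := by
  rw [eq_neg_iff_add_eq_zero, ← LinearMap.add_apply, ← map_add, add_comm, add_conj, map_smul,
    LinearMap.smul_apply, associator_one_left, smul_zero]

theorem associator_mul_right (p q : Octo) :
    h.associator m p (p * q) = sm p.conj (h.associator m p q) := by
  rw [← neg_neg (h.associator m p (p * q)), ← associator_conj_left, associator_apply,
    associator_apply, conj_mul_mul, h.real_smul, ← h.lsmul_apply p.conj (_ - _), map_sub,
    lsmul_apply, lsmul_apply, h.smul_conj_smul, neg_sub]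

variable {m}

theorem associator_mul_right_comm {p r q : Octo} (hp : h.associator m p q = 0)
    (hr : h.associator m r q = 0) :
    h.associator m p (r * q) = -h.associator m r (p * q) := by
  have hadd := h.associator_mul_right m (p + r) q
  simp only [map_add, add_mul, LinearMap.add_apply, associator_mul_right, hp, hr, add_zero,
    ← h.lsmul_apply, map_zero, zero_add] at hadd
  rwa [eq_neg_iff_add_eq_zero, add_comm]

theorem associator_mk_mk_eq_zero (hij : h.associator m (imUnit 0) (imUnit 1) = 0) (a b : ℍ[ℝ]) :
    h.associator m (Octo.mk a 0) (Octo.mk b 0) = 0 := by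
  have hji : h.associator m (imUnit 1) (imUnit 0) = 0 := by rw [associator_swap, hij, neg_zero]
  have hik : h.associator m (imUnit 0) (imUnit 2) = 0 := by
    rw [← i_mul_j, associator_mul_right, hij, ← h.lsmul_apply, map_zero]
  have hjk : h.associator m (imUnit 1) (imUnit 2) = 0 := by
    rw [← neg_eq_zero, ← map_neg, ← j_mul_i, associator_mul_right, hji, ← h.lsmul_apply, map_zero]
  have hki : h.associator m (imUnit 2) (imUnit 0) = 0 := by rw [associator_swap, hik, neg_zero]
  have hkj : h.associator m (imUnit 2) (imUnit 1) = 0 := by rw [associator_swap, hjk, neg_zero]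
  simp only [mk_zero_right_eq a, mk_zero_right_eq b, map_add, map_smul, LinearMap.add_apply,
    LinearMap.smul_apply, associator_one_left, associator_one_right, associator_self, hij, hji, hik,
    hjk, hki, hkj, smul_zero, add_zero]

theorem mem_assocSet_of_associator_l_eq_zero
    (hH : ∀ a b : ℍ[ℝ], h.associator m (Octo.mk a 0) (Octo.mk b 0) = 0)
    (hl : ∀ b : ℍ[ℝ], h.associator m (imUnit 3) (Octo.mk b 0) = 0) : m ∈ assocSet sm := by
  have hHl (a d : ℍ[ℝ]) : h.associator m (Octo.mk a 0) (imUnit 3 * Octo.mk d 0) = 0 := by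
    rw [h.associator_mul_right_comm (hH a d) (hl d), mk_mul_mk, hl, neg_zero]
  have hlH (b c : ℍ[ℝ]) : h.associator m (imUnit 3 * Octo.mk b 0) (Octo.mk c 0) = 0 := by
    rw [associator_swap, hHl, neg_zero]
  have hll (b d : ℍ[ℝ]) :
      h.associator m (imUnit 3 * Octo.mk b 0) (imUnit 3 * Octo.mk d 0) = 0 := by
    rw [h.associator_mul_right_comm (hlH b d) (hl d), l_mul_mk_mul_mk, associator_mul_right, hl,
      ← h.lsmul_apply, map_zero, neg_zero]
  intro x y
  change h.associator m x y = 0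
  rw [eq_add_l_mul x, eq_add_l_mul y]
  simp only [map_add, LinearMap.add_apply, hH, hHl, hlH, hll, add_zero]

theorem mem_assocSet_of_associator_eq_zero
    (hij : h.associator m (imUnit 0) (imUnit 1) = 0)
    (hil : h.associator m (imUnit 0) (imUnit 3) = 0)
    (hjl : h.associator m (imUnit 1) (imUnit 3) = 0)
    (hkl : h.associator m (imUnit 2) (imUnit 3) = 0) : m ∈ assocSet sm := by
  refine h.mem_assocSet_of_associator_l_eq_zero (h.associator_mk_mk_eq_zero hij) fun b => ?_
  rw [associator_swap, mk_zero_right_eq b]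
  simp only [map_add, map_smul, LinearMap.add_apply, LinearMap.smul_apply, associator_one_left,
    hil, hjl, hkl, smul_zero, add_zero, neg_zero]

end Associator

theorem associator_eq_zero_of_triple (h : IsOMod sm) {a b c : Fin 7} {m : M}
    (habc : imUnit b * imUnit a = imUnit c) (hm : cliffordWord h.lsmulUnit [a, b, c] m = m) :
    h.associator m (imUnit b) (imUnit a) = 0 := by
  have hsq (d : Fin 7) (n : M) : h.lsmulUnit d (h.lsmulUnit d n) = -n :=
    LinearMap.congr_fun (h.isCliffordFamily_lsmulUnit.mul_self d) n
  have hm' : h.lsmulUnit a (h.lsmulUnit b (h.lsmulUnit c m)) = m := hm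
  have hba : h.lsmulUnit b (h.lsmulUnit a m) = h.lsmulUnit c m := by
    nth_rw 1 [← hm']
    rw [hsq, map_neg, hsq, neg_neg]
  rw [associator_apply, habc, sub_eq_zero]
  exact hba.symm

/-- The words `j i k`, `l i (il)`, `l j (jl)`, `l k (kl)`, of the form `p q (qp)`. Their values
pairwise commute and square to `1`. -/
def tripleWord : Fin 4 → List (Fin 7) := ![[1, 0, 2], [3, 0, 4], [3, 1, 5], [3, 2, 6]]

/-- The concatenation of the last three triple words. Its value is a central involution of the
Clifford algebra, equal to `1` on `𝕆` and to `-1` on `𝕆̄`. -/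
def centralWord : List (Fin 7) := tripleWord 1 ++ (tripleWord 2 ++ tripleWord 3)

theorem tripleWord_mul_self (h : IsOMod sm) (t : Fin 4) :
    cliffordWord h.lsmulUnit (tripleWord t) * cliffordWord h.lsmulUnit (tripleWord t) = 1 := by
  have hcl := h.isCliffordFamily_lsmulUnit
  fin_cases t <;> exact hcl.triple_mul_self (by decide) (by decide) (by decide)

theorem commute_tripleWord (h : IsOMod sm) (s t : Fin 4) :
    Commute (cliffordWord h.lsmulUnit (tripleWord s)) (cliffordWord h.lsmulUnit (tripleWord t)) :=
  h.isCliffordFamily_lsmulUnit.commute_cliffordWord (by revert s t; decide)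

theorem cliffordWord_centralWord (h : IsOMod sm) : cliffordWord h.lsmulUnit centralWord =
    cliffordWord h.lsmulUnit (tripleWord 1) *
      (cliffordWord h.lsmulUnit (tripleWord 2) * cliffordWord h.lsmulUnit (tripleWord 3)) := by
  rw [centralWord, cliffordWord_append, cliffordWord_append]

theorem centralWord_mul_self (h : IsOMod sm) :
    cliffordWord h.lsmulUnit centralWord * cliffordWord h.lsmulUnit centralWord = 1 := by
  have h₂₃ := h.commute_tripleWord 2 3
  have h₁ := (h.commute_tripleWord 1 2).mul_right (h.commute_tripleWord 1 3)
  rw [cliffordWord_centralWord, h₁.symm.mul_mul_mul_comm, h₂₃.symm.mul_mul_mul_comm]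
  simp only [tripleWord_mul_self, mul_one]

theorem mem_assocSet_of_tripleWord (h : IsOMod sm) {m : M}
    (hΩ : cliffordWord h.lsmulUnit centralWord m = m)
    (h₀ : cliffordWord h.lsmulUnit (tripleWord 0) m = m)
    (h₁ : cliffordWord h.lsmulUnit (tripleWord 1) m = m)
    (h₂ : cliffordWord h.lsmulUnit (tripleWord 2) m = m) : m ∈ assocSet sm := by
  have h₃ : cliffordWord h.lsmulUnit (tripleWord 3) m = m := by
    rw [cliffordWord_centralWord, (h.commute_tripleWord 2 3).eq] at hΩ
    rw [((h.commute_tripleWord 1 3).mul_right (h.commute_tripleWord 1 2)).eq] at hΩ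
    simpa only [mul_apply, h₁, h₂] using hΩ
  exact h.mem_assocSet_of_associator_eq_zero (h.associator_eq_zero_of_triple i_mul_j h₀)
    (h.associator_eq_zero_of_triple i_mul_l h₁) (h.associator_eq_zero_of_triple j_mul_l h₂)
    (h.associator_eq_zero_of_triple k_mul_l h₃)

/-- The elements of `K` fixed by the values of all the words in `L`. -/
def fixedBy (h : IsOMod sm) (K : Submodule ℝ M) (L : List (List (Fin 7))) : Submodule ℝ M :=
  K ⊓ ⨅ w ∈ L, (cliffordWord h.lsmulUnit w).eigenspace 1

theorem mem_fixedBy (h : IsOMod sm) {K : Submodule ℝ M} {L : List (List (Fin 7))} {m : M} :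
    m ∈ h.fixedBy K L ↔ m ∈ K ∧ ∀ w ∈ L, cliffordWord h.lsmulUnit w m = m := by
  simp [fixedBy]

theorem fixedBy_mem_invtSubmodule (h : IsOMod sm) {K : Submodule ℝ M} {L : List (List (Fin 7))}
    (hK : ∀ p, K ∈ (h.lsmul p).invtSubmodule) {w : List (Fin 7)}
    (hw : ∀ v ∈ L, Even (swapCount v w)) :
    h.fixedBy K L ∈ (cliffordWord h.lsmulUnit w).invtSubmodule := by
  intro m hm
  obtain ⟨hmK, hmL⟩ := h.mem_fixedBy.mp hm
  refine h.mem_fixedBy.mpr ⟨h.mem_invtSubmodule_cliffordWord hK w hmK, fun v hv => ?_⟩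
  have hcomm := h.isCliffordFamily_lsmulUnit.commute_cliffordWord (hw v hv)
  have hcomm_m := LinearMap.congr_fun hcomm.eq m
  rwa [mul_apply, mul_apply, hmL v hv] at hcomm_m

theorem fixedBy_le_of_fixedBy_cons_le (h : IsOMod sm) {K N : Submodule ℝ M}
    {L : List (List (Fin 7))} (hK : ∀ p, K ∈ (h.lsmul p).invtSubmodule)
    (hN : ∀ p, N ∈ (h.lsmul p).invtSubmodule) (t : Fin 4) (a : Fin 7)
    (hLt : ∀ v ∈ L, Even (swapCount v (tripleWord t))) (hLa : ∀ v ∈ L, Even (swapCount v [a]))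
    (hta : Odd (swapCount (tripleWord t) [a])) (hle : h.fixedBy K (tripleWord t :: L) ≤ N) :
    h.fixedBy K L ≤ N := by
  have hcl := h.isCliffordFamily_lsmulUnit
  have hsq : cliffordWord h.lsmulUnit [a] * cliffordWord h.lsmulUnit [a] = -1 := by
    simpa using hcl.mul_self a
  refine le_of_inf_eigenspace_one_le (h.tripleWord_mul_self t) hsq
    (hcl.cliffordWord_mul_eq_neg hta) (h.fixedBy_mem_invtSubmodule hK hLt)
    (h.fixedBy_mem_invtSubmodule hK hLa) (h.mem_invtSubmodule_cliffordWord hN [a]) ?_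
  rintro m ⟨hm, hmt⟩
  obtain ⟨hmK, hmL⟩ := h.mem_fixedBy.mp hm
  rw [SetLike.mem_coe, mem_eigenspace_iff, _root_.one_smul] at hmt
  exact hle (h.mem_fixedBy.mpr ⟨hmK, List.forall_mem_cons.mpr ⟨hmt, hmL⟩⟩)

theorem inf_eigenspace_centralWord_le (h : IsOMod sm) {K N : Submodule ℝ M}
    (hK : ∀ p, K ∈ (h.lsmul p).invtSubmodule) (hN : ∀ p, N ∈ (h.lsmul p).invtSubmodule)
    (hKN : ∀ m ∈ K, m ∈ assocSet sm → m ∈ N) :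
    K ⊓ (cliffordWord h.lsmulUnit centralWord).eigenspace 1 ≤ N := by
  suffices h.fixedBy K [centralWord] ≤ N by simpa [fixedBy] using this
  refine h.fixedBy_le_of_fixedBy_cons_le hK hN 0 3 (by decide) (by decide) (by decide) ?_
  refine h.fixedBy_le_of_fixedBy_cons_le hK hN 1 1 (by decide) (by decide) (by decide) ?_
  refine h.fixedBy_le_of_fixedBy_cons_le hK hN 2 0 (by decide) (by decide) (by decide) ?_
  intro m hm
  obtain ⟨hmK, hfix⟩ := h.mem_fixedBy.mp hm
  simp only [List.forall_mem_cons] at hfix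
  obtain ⟨h₂, h₁, h₀, hΩ, -⟩ := hfix
  exact hKN m hmK (h.mem_assocSet_of_tripleWord hΩ h₀ h₁ h₂)

theorem cliffordWord_lsmulUnit_bar_centralWord (h : IsOMod sm) :
    cliffordWord h.bar.lsmulUnit centralWord = -cliffordWord h.lsmulUnit centralWord := by
  rw [lsmulUnit_bar, cliffordWord_neg, show centralWord.length = 9 from rfl,
    Odd.neg_one_pow (by decide), neg_one_mul]

theorem le_of_forall_assocSet (h : IsOMod sm) {K N : Submodule ℝ M}
    (hK : ∀ p, K ∈ (h.lsmul p).invtSubmodule) (hN : ∀ p, N ∈ (h.lsmul p).invtSubmodule)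
    (hassoc : ∀ m ∈ K, m ∈ assocSet sm → m ∈ N)
    (hconj : ∀ m ∈ K, m ∈ conjAssocSet sm → m ∈ N) : K ≤ N := by
  refine le_of_inf_eigenspace_le h.centralWord_mul_self (h.mem_invtSubmodule_cliffordWord hK _)
    (h.inf_eigenspace_centralWord_le hK hN hassoc) fun m hm => ?_
  rw [conjAssocSet_eq_assocSet_barSmul] at hconj
  refine h.bar.inf_eigenspace_centralWord_le (fun p => hK p.conj) (fun p => hN p.conj) hconj
    ⟨hm.1, mem_eigenspace_iff.mpr ?_⟩
  rw [h.cliffordWord_lsmulUnit_bar_centralWord, LinearMap.neg_apply, mem_eigenspace_iff.mp hm.2,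
    neg_one_smul, neg_neg, _root_.one_smul]

end IsOMod

section Hom

variable {M N P : Type*} [AddCommGroup M] [Module ℝ M] [AddCommGroup N] [Module ℝ N]
  [AddCommGroup P] [Module ℝ P] {sm : Octo → M → M} {sn : Octo → N → N} {sp : Octo → P → P}

theorem OIso.symm (h : OIso sm sn) : OIso sn sm := by
  obtain ⟨f, ⟨hlin, hf⟩, hbij⟩ := h
  let e : M ≃ₗ[ℝ] N := .ofBijective (hlin.mk' f) hbij
  refine ⟨e.symm, ⟨e.symm.toLinearMap.isLinear, fun p n => ?_⟩, e.symm.bijective⟩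
  rw [LinearEquiv.symm_apply_eq]
  change _ = f _
  rw [hf]
  exact congrArg (sn p) (e.apply_symm_apply n).symm

theorem OIso.trans (h : OIso sm sn) (h' : OIso sn sp) : OIso sm sp := by
  obtain ⟨f, ⟨hlin, hf⟩, hbij⟩ := h
  obtain ⟨g, ⟨hlin', hg⟩, hbij'⟩ := h'
  exact ⟨g ∘ f, ⟨(hlin'.mk' g ∘ₗ hlin.mk' f).isLinear, fun p m => by simp [hf, hg]⟩,
    hbij'.comp hbij⟩

theorem IsOHom.injective {f : M → N} (hf : IsOHom sm sn f) (hm : IsOMod sm)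
    (hassoc : ∀ m ∈ assocSet sm, f m = 0 → m = 0)
    (hconj : ∀ m ∈ conjAssocSet sm, f m = 0 → m = 0) : Function.Injective f := by
  obtain ⟨hlin, hsmul⟩ := hf
  let F : M →ₗ[ℝ] N := hlin.mk' f
  have hker_smul (p : Octo) : LinearMap.ker F ∈ (hm.lsmul p).invtSubmodule := by
    intro m hFm
    calc f (sm p m) = sn p (f m) := hsmul p m
      _ = sn p (f 0) := by rw [show f m = 0 from hFm, hlin.map_zero]
      _ = f (sm p 0) := (hsmul p 0).symm
      _ = 0 := by rw [← hm.lsmul_apply, map_zero, hlin.map_zero]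
  have hker : LinearMap.ker F ≤ ⊥ :=
    hm.le_of_forall_assocSet hker_smul (fun _ => Module.End.invtSubmodule.bot_mem _)
      (fun m hFm hm' => hassoc m hm' hFm) (fun m hFm hm' => hconj m hm' hFm)
  exact LinearMap.ker_eq_bot.mp (le_bot_iff.mp hker)

theorem IsOHom.surjective {f : M → N} (hf : IsOHom sm sn f) (hn : IsOMod sn)
    (hassoc : assocSet sn ⊆ Set.range f) (hconj : conjAssocSet sn ⊆ Set.range f) :
    Function.Surjective f := by
  obtain ⟨hlin, hsmul⟩ := hf
  let F : M →ₗ[ℝ] N := hlin.mk' f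
  have hrange_smul (p : Octo) : LinearMap.range F ∈ (hn.lsmul p).invtSubmodule := by
    rintro _ ⟨m, rfl⟩
    exact ⟨sm p m, hsmul p m⟩
  have hrange : ⊤ ≤ LinearMap.range F :=
    hn.le_of_forall_assocSet (fun _ => Module.End.invtSubmodule.top_mem _) hrange_smul
      (fun _ _ hn' => hassoc hn') (fun _ _ hn' => hconj hn')
  exact LinearMap.range_eq_top.mp (top_le_iff.mp hrange)

end Hom

namespace IsOMod

open scoped Octo

variable {M ι : Type*} [AddCommGroup M] [Module ℝ M] {sm : Octo → M → M}

/-- The octonionic linear combination `∑ xᵢ vᵢ` as a real linear map in the coefficients. -/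
def linearCombination (h : IsOMod sm) (v : ι → M) : (ι →₀ Octo) →ₗ[ℝ] M :=
  Finsupp.lsum ℝ fun i => h.lsmul.flip (v i)

@[simp] theorem linearCombination_single (h : IsOMod sm) (v : ι → M) (i : ι) (q : Octo) :
    h.linearCombination v (Finsupp.single i q) = sm q (v i) := by
  simp [linearCombination]

theorem linearCombination_mapRange_mul (h : IsOMod sm) {v : ι → M}
    (hv : ∀ i, v i ∈ assocSet sm) (p : Octo) (x : ι →₀ Octo) :
    h.linearCombination v (x.mapRange (p * ·) (mul_zero p)) = sm p (h.linearCombination v x) := by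
  have hcomp : h.linearCombination v ∘ₗ Finsupp.mapRange.linearMap (LinearMap.mulLeft ℝ p) =
      h.lsmul p ∘ₗ h.linearCombination v := by
    refine Finsupp.lhom_ext fun i q => ?_
    rw [LinearMap.comp_apply, Finsupp.mapRange.linearMap_apply, Finsupp.mapRange_single,
      linearCombination_single, LinearMap.comp_apply, linearCombination_single]
    exact sub_eq_zero.mp (hv i p q)
  exact LinearMap.congr_fun hcomp x

end IsOMod

/-- The inclusion of the real families among the families of octonions. -/
def realFinsupp (ι : Type*) : (ι →₀ ℝ) →ₗ[ℝ] (ι →₀ Octo) :=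
  Finsupp.mapRange.linearMap (LinearMap.toSpanSingleton ℝ Octo 1)

@[simp] theorem realFinsupp_apply {ι : Type*} (r : ι →₀ ℝ) (i : ι) :
    realFinsupp ι r i = r i • (1 : Octo) := by
  simp [realFinsupp]

theorem mem_range_realFinsupp {ι : Type*} {x : ι →₀ Octo} (hx : ∀ i, x i ∈ assocSet oSmul) :
    x ∈ Set.range (realFinsupp ι) := by
  refine ⟨x.mapRange Octo.re Octo.re_zero, ?_⟩
  ext1 i
  rw [realFinsupp_apply, Finsupp.mapRange_apply, Octo.re_smul_one_of_mem_assocSet (hx i)]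

theorem IsOMod.linearCombination_realFinsupp {M ι : Type*} [AddCommGroup M] [Module ℝ M]
    {sm : Octo → M → M} (h : IsOMod sm) {S : Submodule ℝ M} (b : Module.Basis ι ℝ S) (r : ι →₀ ℝ) :
    h.linearCombination (fun i => (b i : M)) (realFinsupp ι r) = b.repr.symm r := by
  have hcomp : h.linearCombination (fun i => (b i : M)) ∘ₗ realFinsupp ι =
      S.subtype ∘ₗ b.repr.symm.toLinearMap := by
    ext i
    simp [realFinsupp, h.one_smul]
  exact LinearMap.congr_fun hcomp r

section FinsuppPair

open scoped Octo

/-- The left 𝕆-module structure on `𝕆^(ι₁) ⊕ 𝕆̄^(ι₂)`, for arbitrary index types. -/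
def finsuppPairSmul (ι₁ ι₂ : Type*) :
    Octo → (ι₁ →₀ Octo) × (ι₂ →₀ Octo) → (ι₁ →₀ Octo) × (ι₂ →₀ Octo) :=
  fun p x => (x.1.mapRange (p * ·) (mul_zero p), x.2.mapRange (p.conj * ·) (mul_zero p.conj))

theorem isOMod_finsuppPairSmul (ι₁ ι₂ : Type*) : IsOMod (finsuppPairSmul ι₁ ι₂) where
  smul_add p x y := Prod.ext (Finsupp.ext fun i => Octo.isOMod_oSmul.smul_add p (x.1 i) (y.1 i))
    (Finsupp.ext fun i => Octo.isOMod_oSmul.bar.smul_add p (x.2 i) (y.2 i))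
  add_smul p q x := Prod.ext (Finsupp.ext fun i => Octo.isOMod_oSmul.add_smul p q (x.1 i))
    (Finsupp.ext fun i => Octo.isOMod_oSmul.bar.add_smul p q (x.2 i))
  real_smul r p x := Prod.ext (Finsupp.ext fun i => Octo.isOMod_oSmul.real_smul r p (x.1 i))
    (Finsupp.ext fun i => Octo.isOMod_oSmul.bar.real_smul r p (x.2 i))
  smul_real r p x := Prod.ext (Finsupp.ext fun i => Octo.isOMod_oSmul.smul_real r p (x.1 i))
    (Finsupp.ext fun i => Octo.isOMod_oSmul.bar.smul_real r p (x.2 i))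
  one_smul x := Prod.ext (Finsupp.ext fun i => Octo.isOMod_oSmul.one_smul (x.1 i))
    (Finsupp.ext fun i => Octo.isOMod_oSmul.bar.one_smul (x.2 i))
  alt p q x := Prod.ext (Finsupp.ext fun i => Octo.isOMod_oSmul.alt p q (x.1 i))
    (Finsupp.ext fun i => Octo.isOMod_oSmul.bar.alt p q (x.2 i))

variable {ι₁ ι₂ : Type*}

theorem exists_eq_realFinsupp_zero_of_mem_assocSet {x : (ι₁ →₀ Octo) × (ι₂ →₀ Octo)}
    (hx : x ∈ assocSet (finsuppPairSmul ι₁ ι₂)) : ∃ r, x = (realFinsupp ι₁ r, 0) := by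
  have h₁ (i : ι₁) : x.1 i ∈ assocSet oSmul := fun p q =>
    DFunLike.congr_fun (congrArg Prod.fst (hx p q)) i
  have h₂ (i : ι₂) : x.2 i ∈ conjAssocSet oSmul := by
    rw [conjAssocSet_eq_assocSet_barSmul]
    exact fun p q => DFunLike.congr_fun (congrArg Prod.snd (hx p q)) i
  obtain ⟨r, hr⟩ := mem_range_realFinsupp h₁
  exact ⟨r, Prod.ext hr.symm (Finsupp.ext fun i => Octo.eq_zero_of_mem_conjAssocSet (h₂ i))⟩

theorem exists_eq_zero_realFinsupp_of_mem_conjAssocSet {x : (ι₁ →₀ Octo) × (ι₂ →₀ Octo)}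
    (hx : x ∈ conjAssocSet (finsuppPairSmul ι₁ ι₂)) : ∃ r, x = (0, realFinsupp ι₂ r) := by
  have h₁ (i : ι₁) : x.1 i ∈ conjAssocSet oSmul := fun p q =>
    DFunLike.congr_fun (congrArg Prod.fst (hx p q)) i
  have h₂ (i : ι₂) : x.2 i ∈ assocSet oSmul := by
    rw [assocSet_eq_conjAssocSet_barSmul]
    exact fun p q => DFunLike.congr_fun (congrArg Prod.snd (hx p q)) i
  obtain ⟨r, hr⟩ := mem_range_realFinsupp h₂
  exact ⟨r, Prod.ext (Finsupp.ext fun i => Octo.eq_zero_of_mem_conjAssocSet (h₁ i)) hr.symm⟩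

end FinsuppPair

section Classification

open scoped Octo

variable {M ι₁ ι₂ : Type*} [AddCommGroup M] [Module ℝ M] {sm : Octo → M → M}

theorem IsOMod.finsuppPairSmul_oIso (h : IsOMod sm)
    (b₁ : Module.Basis ι₁ ℝ (Submodule.span ℝ (assocSet sm)))
    (b₂ : Module.Basis ι₂ ℝ (Submodule.span ℝ (conjAssocSet sm))) :
    OIso (finsuppPairSmul ι₁ ι₂) sm := by
  have hb₁ (i : ι₁) : (b₁ i : M) ∈ assocSet sm :=
    h.coe_span_assocSet.subset (b₁ i).2
  have hb₂ (i : ι₂) : (b₂ i : M) ∈ assocSet (barSmul sm) := by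
    rw [← conjAssocSet_eq_assocSet_barSmul]
    exact h.coe_span_conjAssocSet.subset (b₂ i).2
  let f : (ι₁ →₀ Octo) × (ι₂ →₀ Octo) →ₗ[ℝ] M :=
    (h.linearCombination fun i => (b₁ i : M)).coprod (h.bar.linearCombination fun i => (b₂ i : M))
  have hf : IsOHom (finsuppPairSmul ι₁ ι₂) sm f := by
    refine ⟨f.isLinear, fun p x => ?_⟩
    change h.linearCombination _ (x.1.mapRange (p * ·) (mul_zero p)) +
      h.bar.linearCombination _ (x.2.mapRange (p.conj * ·) (mul_zero p.conj)) = _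
    rw [h.linearCombination_mapRange_mul hb₁, h.bar.linearCombination_mapRange_mul hb₂, barSmul,
      Octo.conj_conj, ← h.smul_add]
    rfl
  have hf₁ (r : ι₁ →₀ ℝ) : f (realFinsupp ι₁ r, 0) = b₁.repr.symm r := by
    simp [f, h.linearCombination_realFinsupp b₁]
  have hf₂ (r : ι₂ →₀ ℝ) : f (0, realFinsupp ι₂ r) = b₂.repr.symm r := by
    simp [f, h.bar.linearCombination_realFinsupp b₂]
  refine ⟨f, hf, hf.injective (isOMod_finsuppPairSmul ι₁ ι₂) ?_ ?_, hf.surjective h ?_ ?_⟩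
  · intro x hx hfx
    obtain ⟨r, rfl⟩ := exists_eq_realFinsupp_zero_of_mem_assocSet hx
    rw [hf₁, ZeroMemClass.coe_eq_zero, LinearEquiv.map_eq_zero_iff] at hfx
    simp [hfx]
  · intro x hx hfx
    obtain ⟨r, rfl⟩ := exists_eq_zero_realFinsupp_of_mem_conjAssocSet hx
    rw [hf₂, ZeroMemClass.coe_eq_zero, LinearEquiv.map_eq_zero_iff] at hfx
    simp [hfx]
  · intro m hm
    rw [← h.coe_span_assocSet] at hm
    exact ⟨_, (hf₁ (b₁.repr ⟨m, hm⟩)).trans (by simp)⟩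
  · intro m hm
    rw [← h.coe_span_conjAssocSet] at hm
    exact ⟨_, (hf₂ (b₂.repr ⟨m, hm⟩)).trans (by simp)⟩

theorem finsuppPairSmul_oIso_pairSmul (n₁ n₂ : ℕ) :
    OIso (finsuppPairSmul (Fin n₁) (Fin n₂)) (pairSmul n₁ n₂) :=
  let e := (Finsupp.linearEquivFunOnFinite ℝ Octo (Fin n₁)).prodCongr
    (Finsupp.linearEquivFunOnFinite ℝ Octo (Fin n₂))
  ⟨e, ⟨e.toLinearMap.isLinear, fun _ _ => rfl⟩, e.bijective⟩

theorem IsOMod.rank_eq_eight_mul (h : IsOMod sm) : Module.rank ℝ M =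
    8 * (Module.rank ℝ (Submodule.span ℝ (assocSet sm)) +
      Module.rank ℝ (Submodule.span ℝ (conjAssocSet sm))) := by
  let b₁ := Module.Basis.ofVectorSpace ℝ (Submodule.span ℝ (assocSet sm))
  let b₂ := Module.Basis.ofVectorSpace ℝ (Submodule.span ℝ (conjAssocSet sm))
  obtain ⟨f, ⟨hlin, -⟩, hbij⟩ := h.finsuppPairSmul_oIso b₁ b₂
  rw [← (LinearEquiv.ofBijective (hlin.mk' f) hbij).rank_eq, rank_prod', rank_finsupp,
    rank_finsupp, Octo.rank_eq_eight, b₁.mk_eq_rank'', b₂.mk_eq_rank'', ← add_mul, mul_comm,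
    Cardinal.lift_ofNat, Cardinal.lift_uzero, Cardinal.lift_uzero]

end Classification

theorem stmt1_general {M ι₁ ι₂ : Type*} [AddCommGroup M] [Module ℝ M] {sm : Octo → M → M}
    (h : IsOMod sm) (b₁ : Module.Basis ι₁ ℝ (Submodule.span ℝ (assocSet sm)))
    (b₂ : Module.Basis ι₂ ℝ (Submodule.span ℝ (conjAssocSet sm))) :
    OIso sm (finsuppPairSmul ι₁ ι₂) ∧ Module.rank ℝ M =
      8 * (Module.rank ℝ (Submodule.span ℝ (assocSet sm)) +
        Module.rank ℝ (Submodule.span ℝ (conjAssocSet sm))) :=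
  ⟨(h.finsuppPairSmul_oIso b₁ b₂).symm, h.rank_eq_eight_mul⟩

/-- A finite-dimensional left 𝕆-module of type `(n₁,n₂)` is isomorphic to
`𝕆^{n₁} ⊕ 𝕆̄^{n₂}`; in particular `dim_ℝ M = 8(n₁+n₂)`. -/
theorem stmt1 {M : Type*} [AddCommGroup M] [Module ℝ M] [FiniteDimensional ℝ M]
    (sm : Octo → M → M) (h : IsOMod sm) (n₁ n₂ : ℕ)
    (hn₁ : n₁ = Module.finrank ℝ (Submodule.span ℝ (assocSet sm)))
    (hn₂ : n₂ = Module.finrank ℝ (Submodule.span ℝ (conjAssocSet sm))) :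
    OIso sm (pairSmul n₁ n₂) ∧ Module.finrank ℝ M = 8 * (n₁ + n₂) := by
  obtain ⟨hiso, hrank⟩ := stmt1_general h (Module.finBasisOfFinrankEq ℝ _ hn₁.symm)
    (Module.finBasisOfFinrankEq ℝ _ hn₂.symm)
  refine ⟨hiso.trans (finsuppPairSmul_oIso_pairSmul n₁ n₂), ?_⟩
  rw [hn₁, hn₂]
  simp only [← Module.finrank_eq_rank] at hrank
  exact_mod_cast hrank
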